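/- For $a=0$, the first four moments of the hard-edge spacing density $A_0(z)=\tfrac14 e^{-z/4}[I_2(\sqrt z)^2-I_1(\sqrt z)I_3(\sqrt z)]$ are $m_1=4e^2[I_0(2)-I_1(2)]$, $m_2=32e^2I_0(2)$, $m_3=384e^2[2I_0(2)+I_1(2)]$, and $m_4=2048e^2[13I_0(2)+9I_1(2)]$, where $m_k=\int_0^\infty z^kA_0(z)\,dz$. -/

import Mathlib

open MeasureTheory

/-- The modified Bessel function of the first kind of integer order. -/
noncomputable def besselI (ν : ℕ) (x : ℝ) : ℝ :=
  ∑' k : ℕ, (x / 2) ^ (2 * k + ν) / ((Nat.factorial k : ℝ) * (Nat.factorial (k + ν) : ℝ))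

/-- The hard-edge spacing density at `a = 0`. -/
noncomputable def A0 (z : ℝ) : ℝ :=
  (1 / 4 : ℝ) * Real.exp (-z / 4) *
    (besselI 2 (Real.sqrt z) ^ 2 - besselI 1 (Real.sqrt z) * besselI 3 (Real.sqrt z))

/-!
With `x = √z` and `t = z / 4`, multiplying the Bessel series and using Vandermonde's identity gives
`I_ν² - I_{ν-1} I_{ν+1} = ∑ C(2n, n + ν) tⁿ / (n! (n + 1)!)`. Integrating termwise against
`t ^ k e^{-t}` turns the `k`-th moment into `4 ^ k ∑ C(2n, n + 2) / n! · (n + k)! / (n + 1)!`, where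
the last quotient is a polynomial in `n`. Such sums are combinations of derivatives at `x = 1` of
`∑ C(2n, n + ν) xⁿ / n! = e^{2x} I_ν(2x)`, an identity which comes from expanding
`(T + 2 + T⁻¹) ^ n` in powers of `2` and `T + T⁻¹`. Pascal's rule reduces the derivatives to
values `e² I_μ(2)`, and the three-term recurrence of the Bessel functions reduces these to `I_0(2)`
and `I_1(2)`.
-/

section Series

open Finset

theorem hasSum_of_hasSum_nat_add {G : Type*} [AddCommGroup G] [TopologicalSpace G]
    [IsTopologicalAddGroup G] {f : ℕ → G} {a : G} (k : ℕ) (hf : ∀ n < k, f n = 0)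
    (h : HasSum (fun n ↦ f (n + k)) a) : HasSum f a := by
  simpa [sum_eq_zero fun n hn ↦ hf n (mem_range.mp hn)] using (hasSum_nat_add_iff k).mp h

theorem hasSum_sum_mul_antidiagonal {R : Type*} [NormedRing R] [CompleteSpace R] {f g : ℕ → R}
    {a b : R} (hf : HasSum f a) (hf' : Summable fun n ↦ ‖f n‖) (hg : HasSum g b)
    (hg' : Summable fun n ↦ ‖g n‖) :
    HasSum (fun n ↦ ∑ p ∈ antidiagonal n, f p.1 * g p.2) (a * b) := by
  rw [← hf.tsum_eq, ← hg.tsum_eq,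
    tsum_mul_tsum_eq_tsum_sum_antidiagonal_of_summable_norm hf' hg']
  exact (summable_norm_sum_mul_antidiagonal_of_summable_norm hf' hg').of_norm.hasSum

end Series

section Bessel

open Finset Nat

theorem hasSum_besselI (ν : ℕ) (x : ℝ) :
    HasSum (fun k ↦ (x / 2) ^ (2 * k + ν) / (k ! * (k + ν)!)) (besselI ν x) := by
  refine (Summable.of_norm_bounded
    ((Real.summable_pow_div_factorial ((x / 2) ^ 2)).mul_left (|x / 2| ^ ν)) fun k ↦ ?_).hasSum
  have hk : (1 : ℝ) ≤ (k + ν)! := mod_cast Nat.factorial_pos _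
  calc ‖(x / 2) ^ (2 * k + ν) / (k ! * (k + ν)!)‖
      = |x / 2| ^ ν * ((x / 2) ^ 2) ^ k / (k ! * (k + ν)!) := by
        rw [norm_div, norm_pow, Real.norm_eq_abs, Real.norm_of_nonneg (by positivity), pow_add,
          pow_mul, sq_abs, mul_comm (_ ^ k)]
    _ ≤ |x / 2| ^ ν * ((x / 2) ^ 2) ^ k / (k ! * 1) := by gcongr
    _ = |x / 2| ^ ν * (((x / 2) ^ 2) ^ k / k !) := by rw [mul_one, mul_div_assoc]

theorem mul_besselI_add_two (ν : ℕ) (x : ℝ) :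
    x * besselI (ν + 2) x = x * besselI ν x - 2 * (ν + 1) * besselI (ν + 1) x := by
  refine HasSum.unique (hasSum_of_hasSum_nat_add 1 ?_ ?_)
    (((hasSum_besselI ν x).mul_left x).sub
      ((hasSum_besselI (ν + 1) x).mul_left (2 * (ν + 1 : ℝ))))
  · intro n hn
    obtain rfl : n = 0 := by lia
    simp only [zero_add, Nat.factorial_succ ν]
    push_cast
    field_simp
    ring
  · refine ((hasSum_besselI (ν + 2) x).mul_left x).congr_fun fun k ↦ ?_
    simp only [show k + (ν + 2) = k + ν + 1 + 1 by ring,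
      show k + 1 + (ν + 1) = k + ν + 1 + 1 by ring, show k + 1 + ν = k + ν + 1 by ring,
      Nat.factorial_succ (k + ν + 1), Nat.factorial_succ k]
    push_cast
    field_simp
    ring

theorem sum_antidiagonal_inv_factorial_mul (μ ν n : ℕ) :
    ∑ p ∈ antidiagonal n, (1 / (p.1 ! * (p.1 + μ)!) : ℝ) * (1 / (p.2 ! * (p.2 + ν)!)) =
      (2 * n + μ + ν).choose n / ((n + μ)! * (n + ν)!) := by
  rw [show 2 * n + μ + ν = (n + ν) + (n + μ) by ring, Nat.add_choose_eq, cast_sum, sum_div]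
  refine sum_congr rfl fun ⟨i, j⟩ hp ↦ ?_
  obtain rfl : i + j = n := mem_antidiagonal.mp hp
  simp only [cast_mul, show i + j + ν = i + (j + ν) by ring,
    show i + j + μ = j + (i + μ) by ring, cast_choose ℝ (Nat.le_add_right i (j + ν)),
    cast_choose ℝ (Nat.le_add_right j (i + μ)), Nat.add_sub_cancel_left]
  field_simp

theorem hasSum_besselI_mul_besselI (μ ν : ℕ) (x : ℝ) :
    HasSum (fun n ↦ (2 * n + μ + ν).choose n / ((n + μ)! * (n + ν)!) * (x / 2) ^ (2 * n + μ + ν))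
      (besselI μ x * besselI ν x) := by
  have hμ := hasSum_besselI μ x
  have hν := hasSum_besselI ν x
  refine (hasSum_sum_mul_antidiagonal hμ hμ.summable.norm hν hν.summable.norm).congr_fun fun n ↦ ?_
  rw [← sum_antidiagonal_inv_factorial_mul, sum_mul]
  refine sum_congr rfl fun ⟨i, j⟩ hp ↦ ?_
  obtain rfl : i + j = n := mem_antidiagonal.mp hp
  ring

end Bessel

/-- The coefficient of `T ^ ν` in the Laurent polynomial `(T + 2 + T⁻¹) ^ n`; the central binomial
coefficient for `ν = 0`. -/
def offCentralBinom (ν n : ℕ) : ℕ :=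
  (2 * n).choose (n + ν)

section OffCentralBinom

theorem offCentralBinom_eq_zero {ν n : ℕ} (h : n < ν) : offCentralBinom ν n = 0 :=
  Nat.choose_eq_zero_of_lt (by lia)

theorem offCentralBinom_le (ν n : ℕ) : offCentralBinom ν n ≤ 4 ^ n :=
  (Nat.choose_le_two_pow _ _).trans_eq (by rw [pow_mul]; norm_num)

theorem offCentralBinom_zero_succ (n : ℕ) :
    offCentralBinom 0 (n + 1) = 2 * offCentralBinom 0 n + 2 * offCentralBinom 1 n := by
  calc (2 * n + 1 + 1).choose (n + 1)
      = (2 * n + 1).choose n + (2 * n + 1).choose (n + 1) := Nat.choose_succ_succ _ _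
    _ = 2 * (2 * n + 1).choose (n + 1) := by rw [← Nat.choose_symm_half]; ring
    _ = 2 * (2 * n).choose n + 2 * (2 * n).choose (n + 1) := by
      rw [Nat.choose_succ_succ, mul_add]

theorem offCentralBinom_succ_succ (ν n : ℕ) :
    offCentralBinom (ν + 1) (n + 1) =
      offCentralBinom ν n + 2 * offCentralBinom (ν + 1) n + offCentralBinom (ν + 2) n := by
  simp only [offCentralBinom, show 2 * (n + 1) = 2 * n + 1 + 1 by ring,
    show n + 1 + (ν + 1) = n + ν + 1 + 1 by ring, Nat.choose_succ_succ', ← add_assoc]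
  ring

end OffCentralBinom

section GeneratingFunction

open Finset Nat Polynomial

theorem coeff_pow_add_C_mul_X {R : Type*} [CommSemiring R] (p : R[X]) (a : R)
    (n ν : ℕ) :
    ((p + C a * X) ^ n).coeff (n + ν) =
      ∑ ij ∈ antidiagonal n, n.choose ij.1 * ((p ^ ij.1).coeff (ij.1 + ν) * a ^ ij.2) := by
  rw [(Commute.all _ _).add_pow', finsetSum_coeff]
  refine sum_congr rfl fun ⟨i, j⟩ hij ↦ ?_
  obtain rfl : i + j = n := mem_antidiagonal.mp hij
  rw [coeff_smul, nsmul_eq_mul, mul_pow, ← C_pow, mul_left_comm, coeff_C_mul, add_right_comm,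
    coeff_mul_X_pow, mul_comm (a ^ j)]

theorem hasSum_coeff_pow_add_C_mul_X {p : ℝ[X]} {ν : ℕ} {x s : ℝ}
    (h : HasSum (fun n ↦ (p ^ n).coeff (n + ν) * x ^ n / n !) s) (a : ℝ) :
    HasSum (fun n ↦ ((p + C a * X) ^ n).coeff (n + ν) * x ^ n / n !) (s * Real.exp (a * x)) := by
  have hexp : HasSum (fun n ↦ (a * x) ^ n / n !) (Real.exp (a * x)) := by
    rw [Real.exp_eq_exp_ℝ]
    exact NormedSpace.expSeries_div_hasSum_exp (a * x)
  refine (hasSum_sum_mul_antidiagonal h h.summable.norm hexp hexp.summable.norm).congr_fun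
    fun n ↦ ?_
  rw [coeff_pow_add_C_mul_X, sum_mul, sum_div]
  refine sum_congr rfl fun ⟨i, j⟩ hij ↦ ?_
  obtain rfl : i + j = n := mem_antidiagonal.mp hij
  rw [cast_add_choose]
  field_simp
  ring

/-- The coefficient is that of `T ^ ν` in `(T + T⁻¹) ^ n`, so this is the classical expansion
`exp (x (T + T⁻¹)) = ∑ I_ν(2x) T ^ ν`. -/
theorem hasSum_coeff_pow_X_sq_add_one (ν : ℕ) (x : ℝ) :
    HasSum (fun n ↦ ((X ^ 2 + 1 : ℝ[X]) ^ n).coeff (n + ν) * x ^ n / n !) (besselI ν (2 * x)) := by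
  have hcoeff (n : ℕ) : ((X ^ 2 + 1 : ℝ[X]) ^ n).coeff (n + ν) =
      if 2 ∣ n + ν then (n.choose ((n + ν) / 2) : ℝ) else 0 := by
    rw [← coeff_X_add_one_pow ℝ, ← coeff_expand two_pos]
    simp
  have hinj : Function.Injective fun k : ℕ ↦ 2 * k + ν := fun a b h ↦ by grind
  refine (hinj.hasSum_iff fun n hn ↦ ?_).mp ((hasSum_besselI ν (2 * x)).congr_fun fun k ↦ ?_)
  · have hlt : 2 ∣ n + ν → n < (n + ν) / 2 := fun hdvd ↦ by
      by_contra! hle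
      exact hn ⟨(n - ν) / 2, by lia⟩
    rw [hcoeff]
    split_ifs with hdvd
    · simp [Nat.choose_eq_zero_of_lt (hlt hdvd)]
    · simp
  · rw [Function.comp_apply, hcoeff, if_pos (by lia), show (2 * k + ν + ν) / 2 = k + ν by lia,
      show 2 * k + ν = k + (k + ν) by ring, cast_choose ℝ (Nat.le_add_left _ _),
      Nat.add_sub_cancel]
    field_simp

end GeneratingFunction

/-- The `j`-th derivative at `x` of the exponential generating function of `offCentralBinom ν`,
encoded as the power series with shifted coefficients. -/
noncomputable def offCentralEGF (j ν : ℕ) (x : ℝ) : ℝ :=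
  ∑' n : ℕ, (offCentralBinom ν (n + j) : ℝ) * x ^ n / n.factorial

section OffCentralEGF

open Finset Nat Polynomial

theorem hasSum_offCentralEGF (j ν : ℕ) (x : ℝ) :
    HasSum (fun n ↦ offCentralBinom ν (n + j) * x ^ n / n !) (offCentralEGF j ν x) := by
  refine (Summable.of_norm_bounded
    ((Real.summable_pow_div_factorial (4 * |x|)).mul_left (4 ^ j)) fun n ↦ ?_).hasSum
  have hle : (offCentralBinom ν (n + j) : ℝ) ≤ 4 ^ (n + j) := mod_cast offCentralBinom_le ν (n + j)
  calc ‖offCentralBinom ν (n + j) * x ^ n / (n ! : ℝ)‖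
      = offCentralBinom ν (n + j) * |x| ^ n / (n !) := by simp
    _ ≤ 4 ^ (n + j) * |x| ^ n / (n !) := by gcongr
    _ = 4 ^ j * ((4 * |x|) ^ n / n !) := by ring

theorem offCentralEGF_zero (ν : ℕ) (x : ℝ) :
    offCentralEGF 0 ν x = besselI ν (2 * x) * Real.exp (2 * x) := by
  refine ((hasSum_coeff_pow_add_C_mul_X (hasSum_coeff_pow_X_sq_add_one ν x) 2).congr_fun
    fun n ↦ ?_).tsum_eq
  have hsq : (X ^ 2 + 1 + C 2 * X : ℝ[X]) = (X + 1) ^ 2 := by rw [map_ofNat]; ring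
  rw [hsq, ← pow_mul, coeff_X_add_one_pow, add_zero, offCentralBinom]

theorem offCentralEGF_succ_zero (j : ℕ) (x : ℝ) :
    offCentralEGF (j + 1) 0 x = 2 * offCentralEGF j 0 x + 2 * offCentralEGF j 1 x := by
  refine ((((hasSum_offCentralEGF j 0 x).mul_left 2).add
    ((hasSum_offCentralEGF j 1 x).mul_left 2)).congr_fun fun n ↦ ?_).tsum_eq
  rw [← add_assoc, offCentralBinom_zero_succ]
  push_cast
  ring

theorem offCentralEGF_succ_succ (j ν : ℕ) (x : ℝ) :
    offCentralEGF (j + 1) (ν + 1) x =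
      offCentralEGF j ν x + 2 * offCentralEGF j (ν + 1) x + offCentralEGF j (ν + 2) x := by
  refine ((((hasSum_offCentralEGF j ν x).add ((hasSum_offCentralEGF j (ν + 1) x).mul_left 2)).add
    (hasSum_offCentralEGF j (ν + 2) x)).congr_fun fun n ↦ ?_).tsum_eq
  rw [← add_assoc, offCentralBinom_succ_succ]
  push_cast
  ring

theorem hasSum_choose_mul_offCentralBinom (j ν : ℕ) (x : ℝ) :
    HasSum (fun n ↦ n.choose j * (offCentralBinom ν n * x ^ n / n !))
      (x ^ j / j ! * offCentralEGF j ν x) := by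
  refine hasSum_of_hasSum_nat_add j (fun n hn ↦ by simp [Nat.choose_eq_zero_of_lt hn])
    (((hasSum_offCentralEGF j ν x).mul_left (x ^ j / j !)).congr_fun fun n ↦ ?_)
  rw [← Nat.choose_symm_add, cast_add_choose]
  field_simp
  ring

theorem hasSum_offCentralBinom_mul_factorial_div (k ν : ℕ) (x : ℝ) :
    HasSum (fun n ↦ offCentralBinom ν n * x ^ n / n ! * ((n + (k + 1))! / (n + 1)!))
      (k ! * ∑ ij ∈ antidiagonal k,
        (k + 1).choose ij.2 * (x ^ ij.1 / ij.1 ! * offCentralEGF ij.1 ν x)) := by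
  refine ((hasSum_sum fun ij _ ↦ (hasSum_choose_mul_offCentralBinom ij.1 ν x).mul_left
    ((k + 1).choose ij.2 : ℝ)).mul_left (k ! : ℝ)).congr_fun fun n ↦ ?_
  have hchoose : ((n + (k + 1))! / (n + 1)! : ℝ) = k ! * (n + (k + 1)).choose k := by
    rw [show n + (k + 1) = k + (n + 1) by ring, cast_add_choose]
    field_simp
  rw [hchoose, Nat.add_choose_eq, cast_sum, mul_sum, mul_sum, mul_sum]
  refine sum_congr rfl fun ij _ ↦ ?_
  push_cast
  ring

end OffCentralEGF

section Turan

open Nat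

theorem hasSum_besselI_succ_sq_sub (ν : ℕ) (x : ℝ) :
    HasSum (fun n ↦ offCentralBinom (ν + 1) n / (n ! * (n + 1)!) * ((x / 2) ^ 2) ^ n)
      (besselI (ν + 1) x ^ 2 - besselI ν x * besselI (ν + 2) x) := by
  refine hasSum_of_hasSum_nat_add (ν + 1) (fun n hn ↦ by simp [offCentralBinom_eq_zero hn]) ?_
  rw [sq (besselI _ x)]
  refine ((hasSum_besselI_mul_besselI (ν + 1) (ν + 1) x).sub
    (hasSum_besselI_mul_besselI ν (ν + 2) x)).congr_fun fun n ↦ ?_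
  have hchoose : offCentralBinom (ν + 1) (n + (ν + 1)) = (2 * (n + (ν + 1))).choose n :=
    Nat.choose_symm_of_eq_add (by ring)
  rw [hchoose, show 2 * n + (ν + 1) + (ν + 1) = 2 * (n + (ν + 1)) by ring,
    show 2 * n + ν + (ν + 2) = 2 * (n + (ν + 1)) by ring, pow_mul,
    show n + (ν + 2) = n + ν + 1 + 1 by ring, ← add_assoc, Nat.factorial_succ (n + ν + 1),
    Nat.factorial_succ (n + ν)]
  push_cast
  field_simp
  ring

end Turan

section Moments

open Finset Nat
open Set (Ioi)

theorem integrableOn_pow_mul_exp_neg (n : ℕ) :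
    IntegrableOn (fun t : ℝ ↦ t ^ n * Real.exp (-t)) (Ioi 0) := by
  simpa [mul_comm] using Real.GammaIntegral_convergent (show (0 : ℝ) < n + 1 by positivity)

theorem integral_pow_mul_exp_neg (n : ℕ) : ∫ t in Ioi (0 : ℝ), t ^ n * Real.exp (-t) = n ! := by
  rw [← Real.Gamma_nat_eq_factorial, Real.Gamma_eq_integral (by positivity)]
  simp [mul_comm]

theorem integral_pow_mul_exp_neg_mul_of_hasSum {c : ℕ → ℝ} {f : ℝ → ℝ} {k : ℕ} {s : ℝ}
    (hf : ∀ t > 0, HasSum (fun n ↦ c n * t ^ n) (f t))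
    (hs : HasSum (fun n ↦ c n * (n + k)!) s) :
    ∫ t in Ioi (0 : ℝ), t ^ k * (Real.exp (-t) * f t) = s := by
  have hint (n : ℕ) : ∫ t in Ioi (0 : ℝ), c n * (t ^ (n + k) * Real.exp (-t)) = c n * (n + k)! := by
    rw [integral_const_mul, integral_pow_mul_exp_neg]
  have hnorm (n : ℕ) :
      ∫ t in Ioi (0 : ℝ), ‖c n * (t ^ (n + k) * Real.exp (-t))‖ = ‖c n * (n + k)!‖ := by
    calc ∫ t in Ioi (0 : ℝ), ‖c n * (t ^ (n + k) * Real.exp (-t))‖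
        = ∫ t in Ioi (0 : ℝ), ‖c n‖ * (t ^ (n + k) * Real.exp (-t)) :=
          setIntegral_congr_fun measurableSet_Ioi fun t (ht : 0 < t) ↦ by
            rw [norm_mul, Real.norm_of_nonneg (by positivity : 0 ≤ t ^ (n + k) * Real.exp (-t))]
      _ = ‖c n * (n + k)!‖ := by
          rw [integral_const_mul, integral_pow_mul_exp_neg, norm_mul, RCLike.norm_natCast]
  have hsum := hasSum_integral_of_summable_integral_norm (μ := volume.restrict (Ioi (0 : ℝ)))
    (fun n ↦ (integrableOn_pow_mul_exp_neg (n + k)).const_mul (c n))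
    (by simpa only [hnorm] using hs.summable.norm)
  simp only [hint] at hsum
  rw [hs.unique hsum]
  refine setIntegral_congr_fun measurableSet_Ioi fun t ht ↦ ?_
  rw [← mul_assoc]
  refine (HasSum.tsum_eq ?_).symm
  exact ((hf t ht).mul_left (t ^ k * Real.exp (-t))).congr_fun fun n ↦ by ring

theorem A0_four_mul (t : ℝ) :
    A0 (4 * t) = 1 / 4 * (Real.exp (-t) *
      (besselI 2 √(4 * t) ^ 2 - besselI 1 √(4 * t) * besselI 3 √(4 * t))) := by
  rw [A0, show -(4 * t) / 4 = -t by ring, mul_assoc]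

theorem integral_pow_mul_A0_of_hasSum {k : ℕ} {s : ℝ}
    (h : HasSum (fun n ↦ offCentralBinom 2 n / (n ! * (n + 1)!) * ((n + k)! : ℝ)) s) :
    ∫ z in Ioi (0 : ℝ), z ^ k * A0 z = 4 ^ k * s := by
  have hturan : ∀ t > 0, HasSum (fun n ↦ (offCentralBinom 2 n / (n ! * (n + 1)!) : ℝ) * t ^ n)
      (besselI 2 √(4 * t) ^ 2 - besselI 1 √(4 * t) * besselI 3 √(4 * t)) := fun t ht ↦ by
    have hsq : (√(4 * t) / 2) ^ 2 = t := by
      rw [div_pow, Real.sq_sqrt (by positivity)]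
      ring
    simpa only [hsq] using hasSum_besselI_succ_sq_sub 1 √(4 * t)
  rw [← integral_pow_mul_exp_neg_mul_of_hasSum hturan h, ← integral_const_mul,
    ← mul_zero (4 : ℝ), ← integral_comp_mul_left_Ioi' _ _ four_pos, smul_eq_mul,
    ← integral_const_mul, mul_zero]
  congr 1 with t
  rw [A0_four_mul]
  ring

theorem integral_pow_succ_mul_A0 (k : ℕ) :
    ∫ z in Ioi (0 : ℝ), z ^ (k + 1) * A0 z =
      4 ^ (k + 1) * (k ! * ∑ ij ∈ antidiagonal k,
        (k + 1).choose ij.2 * (offCentralEGF ij.1 2 1 / ij.1 !)) := by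
  have h := hasSum_offCentralBinom_mul_factorial_div k 2 1
  simp only [one_pow, mul_one, one_div_mul_eq_div] at h
  refine integral_pow_mul_A0_of_hasSum (h.congr_fun fun n ↦ ?_)
  rw [mul_div_assoc', div_mul_eq_mul_div, div_mul_eq_mul_div, div_div]

end Moments

section Values

theorem besselI_two_two : besselI 2 2 = besselI 0 2 - besselI 1 2 := by
  have h := mul_besselI_add_two 0 2
  norm_num at h
  linarith

theorem besselI_three_two : besselI 3 2 = 3 * besselI 1 2 - 2 * besselI 0 2 := by
  have h := mul_besselI_add_two 1 2
  norm_num [besselI_two_two] at h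
  linarith

theorem besselI_four_two : besselI 4 2 = 7 * besselI 0 2 - 10 * besselI 1 2 := by
  have h := mul_besselI_add_two 2 2
  norm_num [besselI_two_two, besselI_three_two] at h
  linarith

theorem besselI_five_two : besselI 5 2 = 43 * besselI 1 2 - 30 * besselI 0 2 := by
  have h := mul_besselI_add_two 3 2
  norm_num [besselI_three_two, besselI_four_two] at h
  linarith

theorem offCentralEGF_zero_two_one :
    offCentralEGF 0 2 1 = Real.exp 2 * (besselI 0 2 - besselI 1 2) := by
  rw [offCentralEGF_zero, mul_one, besselI_two_two, mul_comm]

theorem offCentralEGF_one_two_one : offCentralEGF 1 2 1 = Real.exp 2 * (2 * besselI 1 2) := by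
  simp only [offCentralEGF_succ_succ, offCentralEGF_zero, mul_one, Nat.reduceAdd,
    besselI_two_two, besselI_three_two]
  ring

theorem offCentralEGF_two_two_one : offCentralEGF 2 2 1 = Real.exp 2 * (6 * besselI 0 2) := by
  simp only [offCentralEGF_succ_succ, offCentralEGF_zero, mul_one, zero_add, Nat.reduceAdd,
    besselI_two_two, besselI_three_two, besselI_four_two]
  ring

theorem offCentralEGF_three_two_one :
    offCentralEGF 3 2 1 = Real.exp 2 * (8 * besselI 0 2 + 24 * besselI 1 2) := by
  simp only [offCentralEGF_succ_succ, offCentralEGF_succ_zero, offCentralEGF_zero, mul_one,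
    zero_add, Nat.reduceAdd, besselI_two_two, besselI_three_two, besselI_four_two,
    besselI_five_two]
  ring

end Values

/-- The first four moments of the hard-edge spacing density `A_0`. -/
theorem hard_edge_a0_moments :
    (∫ z in Set.Ioi (0 : ℝ), z ^ 1 * A0 z)
        = 4 * Real.exp 2 * (besselI 0 2 - besselI 1 2) ∧
    (∫ z in Set.Ioi (0 : ℝ), z ^ 2 * A0 z)
        = 32 * Real.exp 2 * besselI 0 2 ∧
    (∫ z in Set.Ioi (0 : ℝ), z ^ 3 * A0 z)
        = 384 * Real.exp 2 * (2 * besselI 0 2 + besselI 1 2) ∧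
    (∫ z in Set.Ioi (0 : ℝ), z ^ 4 * A0 z)
        = 2048 * Real.exp 2 * (13 * besselI 0 2 + 9 * besselI 1 2) := by
  refine ⟨(integral_pow_succ_mul_A0 0).trans ?_, (integral_pow_succ_mul_A0 1).trans ?_,
    (integral_pow_succ_mul_A0 2).trans ?_, (integral_pow_succ_mul_A0 3).trans ?_⟩
  all_goals
    norm_num [Finset.Nat.antidiagonal_succ, Nat.factorial, Nat.choose, offCentralEGF_zero_two_one,
      offCentralEGF_one_two_one, offCentralEGF_two_two_one, offCentralEGF_three_two_one]
    ring
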